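/- For a finite set x of distinct points on the real line with the sequential-neighbour relation, condition (C1) holds: if the clique indicator of a subset y of z changes upon adding a new point u (i.e., χ(y|z) ≠ χ(y|z ∪ {u})), then every point of y is a sequential neighbour of u in z ∪ {u}. -/

import Mathlib

/-!
Adding `u` can only destroy the clique property of `y`, and does so exactly when `u` lies strictly
between two points `p`, `q` of `y`. Every `a ∈ y` then sees `u` on the way to `p` or to `q`, so the
open interval between `a` and `u` lies in one with endpoints in `y`, which contains no point of `z`.
-/

open scoped Classical

/-- Sequential-neighbour relation on the real line: no point of `x` lies strictly
between `a` and `b`. -/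
def SeqNbr (x : Finset ℝ) (a b : ℝ) : Prop :=
  ∀ c ∈ x, ¬(min a b < c ∧ c < max a b)

/-- Clique indicator for the sequential-neighbour relation (equal to 1 for sets of
size at most one). -/
noncomputable def chiSeq (x y : Finset ℝ) : ℕ :=
  if ∀ a ∈ y, ∀ b ∈ y, SeqNbr x a b then 1 else 0

section LinearOrder

variable {α : Type*} [LinearOrder α]

theorem uIoo_subset_uIoo_or_of_mem_uIcc {p q u : α} (hu : u ∈ Set.uIcc p q) (a : α) :
    Set.uIoo a u ⊆ Set.uIoo a p ∨ Set.uIoo a u ⊆ Set.uIoo a q := by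
  wlog hpq : p ≤ q generalizing p q
  · exact (this (Set.uIcc_comm p q ▸ hu) (le_of_not_ge hpq)).symm
  obtain ⟨hpu, huq⟩ := Set.uIcc_of_le hpq ▸ hu
  rcases le_total a u with hau | hua
  · right
    rw [Set.uIoo_of_le hau, Set.uIoo_of_le (hau.trans huq)]
    exact Set.Ioo_subset_Ioo_right huq
  · left
    rw [Set.uIoo_of_ge hua, Set.uIoo_of_ge (hpu.trans hua)]
    exact Set.Ioo_subset_Ioo_left hpu

/-- `IsSeqClique x y` says that `y` is a clique for the sequential-neighbour relation of `x` in a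
linear order: `x` misses every open interval with endpoints in `y`. The case `a = b` is not
excluded, since `Set.uIoo a a = ∅`. -/
def IsSeqClique (x y : Set α) : Prop :=
  ∀ a ∈ y, ∀ b ∈ y, Disjoint x (Set.uIoo a b)

theorem isSeqClique_insert_iff {x y : Set α} {u : α} :
    IsSeqClique (insert u x) y ↔ IsSeqClique x y ∧ ∀ a ∈ y, ∀ b ∈ y, u ∉ Set.uIoo a b := by
  simp only [IsSeqClique, Set.disjoint_insert_left, imp_and, forall_and]
  exact and_comm

theorem IsSeqClique.disjoint_uIoo_of_mem_uIcc {x y : Set α} (hx : IsSeqClique x y) {p q u a : α}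
    (hp : p ∈ y) (hq : q ∈ y) (hu : u ∈ Set.uIcc p q) (ha : a ∈ y) :
    Disjoint x (Set.uIoo a u) :=
  (uIoo_subset_uIoo_or_of_mem_uIcc hu a).elim (hx a ha p hp).mono_right (hx a ha q hq).mono_right

theorem seqNbr_C1_general {y z : Set α} {u : α}
    (h : ¬(IsSeqClique z y ↔ IsSeqClique (insert u z) y)) :
    ∀ a ∈ y, Disjoint (insert u z) (Set.uIoo a u) := by
  obtain ⟨hz, p, hp, q, hq, hu⟩ :
      IsSeqClique z y ∧ ∃ p ∈ y, ∃ q ∈ y, u ∈ Set.uIoo p q := by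
    simpa only [isSeqClique_insert_iff, iff_self_and, Classical.not_imp, not_forall, not_not,
      exists_prop] using h
  intro a ha
  exact Set.disjoint_insert_left.mpr ⟨Set.right_notMem_uIoo,
    hz.disjoint_uIoo_of_mem_uIcc hp hq (Set.uIoo_subset_uIcc_self hu) ha⟩

end LinearOrder

theorem seqNbr_iff_disjoint_uIoo {x : Finset ℝ} {a b : ℝ} :
    SeqNbr x a b ↔ Disjoint (x : Set ℝ) (Set.uIoo a b) :=
  Set.disjoint_left.symm

theorem chiSeq_eq_ite {x y : Finset ℝ} :
    chiSeq x y = if IsSeqClique (x : Set ℝ) y then 1 else 0 := by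
  simp only [chiSeq, seqNbr_iff_disjoint_uIoo, IsSeqClique, Finset.mem_coe]

theorem chiSeq_eq_chiSeq_iff {x x' y y' : Finset ℝ} :
    chiSeq x y = chiSeq x' y' ↔ (IsSeqClique (x : Set ℝ) y ↔ IsSeqClique (x' : Set ℝ) y') := by
  rw [chiSeq_eq_ite, chiSeq_eq_ite]
  split_ifs with h h' h' <;> simp [h, h']

/-- Consistency condition (C1) for the sequential-neighbour relation on ℝ: if the
clique indicator of `y ⊆ z` changes upon adding a new point `u`, then every point of
`y` is a sequential neighbour of `u` in `z ∪ {u}`. -/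
theorem seqNbr_C1 (y z : Finset ℝ) (hyz : y ⊆ z) (u : ℝ) (hu : u ∉ z) :
    chiSeq z y ≠ chiSeq (insert u z) y → ∀ a ∈ y, SeqNbr (insert u z) a u := by
  simpa only [Ne, chiSeq_eq_chiSeq_iff, seqNbr_iff_disjoint_uIoo, Finset.coe_insert, Finset.mem_coe]
    using seqNbr_C1_general (y := (y : Set ℝ)) (z := z) (u := u)
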